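/- arXiv:0908.3030 — 6 statements merged into one kernel-verified Lean document; each statement's English description precedes it below -/
import Mathlib

section
/- The Euler–Mascheroni constant satisfies the series identity γ = 1 − log(3/2) − Σ_{n=1}^{∞} (ζ(2n+1) − 1) / (4^n (2n+1)), where ζ denotes the Riemann zeta function and the series on the right converges. -/
/-!
Expanding each `ζ(2n+1) - 1 = Σ_{k ≥ 2} 1 / k^(2n+1)` gives a double series with nonnegative terms,
so the order of summation may be exchanged. For fixed `k`, the sum over `n` is the series of
`log (1 + x) - log (1 - x)` at `x = 1 / (2k)` without its leading term, that is
`log (2k + 1) - log (2k - 1) - 1 / k` (`hasSum_row`). The sum of these over `2 ≤ k ≤ N` telescopes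
to `log (2N + 1) - log 3 - (H_N - 1)`, which tends to `1 - log (3 / 2) - γ` (`hasSum_rows`).
-/

/-- The term of the double series with `k = j + 2` and exponent `2 (n + 1) + 1`. -/
noncomputable def gammaTerm (p : ℕ × ℕ) : ℝ :=
  1 / ((p.1 : ℝ) + 2) ^ (2 * (p.2 + 1) + 1) / (4 ^ (p.2 + 1) * (2 * ((p.2 : ℝ) + 1) + 1))

/-- The sum of the `j`-th row of `gammaTerm`, in closed form. -/
noncomputable def gammaRow (j : ℕ) : ℝ :=
  Real.log (2 * (j : ℝ) + 5) - Real.log (2 * (j : ℝ) + 3) - 1 / ((j : ℝ) + 2)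

lemma gammaTerm_nonneg (p : ℕ × ℕ) : 0 ≤ gammaTerm p := by
  unfold gammaTerm
  positivity

lemma hasSum_row (j : ℕ) : HasSum (fun n => gammaTerm (j, n)) (gammaRow j) := by
  have hj : (0 : ℝ) ≤ j := j.cast_nonneg
  have hk : (0 : ℝ) < (j : ℝ) + 2 := by positivity
  have hx : |1 / (2 * ((j : ℝ) + 2))| < 1 := by
    rw [abs_of_nonneg (by positivity), div_lt_one (by positivity)]
    linarith
  have h := Real.hasSum_log_sub_log_of_abs_lt_one hx
  rw [← hasSum_nat_add_iff' 1] at h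
  convert h using 1
  · rfl
  · funext n
    have h4 : (4 : ℝ) ^ (n + 1) = 2 ^ (2 * (n + 1)) := by
      rw [pow_mul]; norm_num
    simp only [gammaTerm]
    rw [h4]
    push_cast
    rw [div_pow, mul_pow, one_pow, pow_succ (2 : ℝ) (2 * (n + 1))]
    field_simp
  · have h1 : 1 + 1 / (2 * ((j : ℝ) + 2)) = (2 * (j : ℝ) + 5) / (2 * ((j : ℝ) + 2)) := by
      field_simp; ring
    have h2 : 1 - 1 / (2 * ((j : ℝ) + 2)) = (2 * (j : ℝ) + 3) / (2 * ((j : ℝ) + 2)) := by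
      field_simp; ring
    rw [h1, h2, Real.log_div (by positivity) (by positivity),
      Real.log_div (by positivity) (by positivity)]
    simp [gammaRow]
    field_simp

lemma sum_gammaRow (N : ℕ) : ∑ j ∈ Finset.range N, gammaRow j =
    Real.log (2 * (N : ℝ) + 3) - Real.log 3 - ((harmonic (N + 1) : ℝ) - 1) := by
  induction N with
  | zero => simp
  | succ N ih =>
    rw [Finset.sum_range_succ, ih, harmonic_succ (N + 1), gammaRow]
    push_cast
    rw [show 2 * ((N : ℝ) + 1) + 3 = 2 * N + 5 by ring, show (N : ℝ) + 1 + 1 = N + 2 by ring]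
    ring

lemma hasSum_rows :
    HasSum gammaRow (1 - Real.log (3 / 2) - Real.eulerMascheroniConstant) := by
  rw [hasSum_iff_tendsto_nat_of_nonneg
    (fun j => (hasSum_row j).nonneg fun n => gammaTerm_nonneg (j, n))]
  have hγ := Real.tendsto_harmonic_sub_log.comp (Filter.tendsto_add_atTop_nat 1)
  have hlim : Filter.Tendsto (fun N : ℕ => Real.log (2 + 1 / ((N : ℝ) + 1))) Filter.atTop
      (nhds (Real.log (2 + 0))) :=
    (tendsto_const_nhds.add tendsto_one_div_add_atTop_nhds_zero_nat).log (by norm_num)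
  have h := ((hlim.sub_const (Real.log 3)).add_const 1).sub hγ
  convert h using 1
  · funext N
    have hN : 2 + 1 / ((N : ℝ) + 1) = (2 * N + 3) / (N + 1) := by
      field_simp; ring
    rw [sum_gammaRow, hN, Real.log_div (by positivity) (by positivity)]
    simp only [Function.comp]
    push_cast
    ring
  · rw [Real.log_div (by norm_num) (by norm_num), add_zero]
    ring_nf

lemma hasSum_gammaTerm :
    HasSum gammaTerm (1 - Real.log (3 / 2) - Real.eulerMascheroniConstant) := by
  have hs : Summable gammaTerm := by
    rw [summable_prod_of_nonneg gammaTerm_nonneg]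
    refine ⟨fun j => (hasSum_row j).summable, ?_⟩
    simpa only [(hasSum_row _).tsum_eq] using hasSum_rows.summable
  rw [← (hs.hasSum.prod_fiberwise hasSum_row).unique hasSum_rows]
  exact hs.hasSum

lemma hasSum_column (n : ℕ) : HasSum (fun j => gammaTerm (j, n))
    (((∑' j : ℕ, (1 : ℝ) / (j + 1 : ℝ) ^ (2 * (n + 1) + 1)) - 1) /
      (4 ^ (n + 1) * (2 * (n + 1) + 1 : ℝ))) := by
  have hs : Summable fun j : ℕ => (1 : ℝ) / (j + 1 : ℝ) ^ (2 * (n + 1) + 1) := by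
    have h := (summable_nat_add_iff 1).2
      (Real.summable_one_div_nat_pow.2 (show 1 < 2 * (n + 1) + 1 by lia))
    simpa using h
  have h := (hasSum_nat_add_iff' 1).2 hs.hasSum
  convert h.div_const (4 ^ (n + 1) * (2 * (n + 1) + 1 : ℝ)) using 1
  · rfl
  · funext j
    simp only [gammaTerm]
    push_cast
    rw [show (j : ℝ) + 1 + 1 = j + 2 by ring]
  · simp

/-- The Euler–Mascheroni constant satisfies
`γ = 1 − log(3/2) − Σ_{n=1}^∞ (ζ(2n+1) − 1) / (4^n (2n+1))`,
where `ζ(m) = Σ_{j=1}^∞ 1/j^m`. -/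
theorem gamma_series_identity :
    HasSum
      (fun n : ℕ =>
        ((∑' j : ℕ, (1 : ℝ) / (j + 1 : ℝ) ^ (2 * (n + 1) + 1)) - 1) /
          (4 ^ (n + 1) * (2 * (n + 1) + 1 : ℝ)))
      (1 - Real.log (3 / 2) - Real.eulerMascheroniConstant) :=
  ((Equiv.prodComm ℕ ℕ).hasSum_iff.2 hasSum_gammaTerm).prod_fiberwise hasSum_column
end

section
/- For every real x with |x| < π/2, tan x = Σ_{k=1}^{∞} (−1)^{k+1} · 4^k (4^k − 1) / (2k)! · B_{2k} · x^{2k−1}, where the series converges. -/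
/-!
The identity `tan x = cot x - 2 cot (2x)` reduces the claim to the Laurent expansion of the
cotangent, `1/y - cot y = Σ_k (-1)^k 4^(k+1) B_(2k+2) / (2k+2)! · y^(2k+1)` for `0 < |y| < π`
(`hasSum_inv_sub_cot`), used at `y = x` and `y = 2x`.

That expansion follows from the Mittag-Leffler series of the cotangent. With `y = π t`, each term
`2t / ((n+1)² - t²)` is a geometric series in `k` with terms `2 t^(2k+1) / (n+1)^(2k+2)`. The
double series converges absolutely, and summing over `n` first gives the values `ζ(2k+2)`,
which Euler's formula expresses through Bernoulli numbers.
-/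

/-- The Mittag-Leffler expansion of the cotangent, restricted to the real interval `(-1, 1)`. -/
lemma hasSum_mittagLeffler_cot (t : ℝ) (ht0 : t ≠ 0) (ht : |t| < 1) :
    HasSum (fun n : ℕ => 2 * t / (((n : ℝ) + 1) ^ 2 - t ^ 2))
      (1 / t - Real.pi * Real.cot (Real.pi * t)) := by
  have hz : (t : ℂ) ∈ Complex.integerComplement := by
    rintro ⟨m, hm⟩
    have hm' : (m : ℝ) = t := by exact_mod_cast hm
    rw [← hm'] at ht ht0
    have h1 : |m| < 1 := by exact_mod_cast ht
    have h2 : m = 0 := Int.abs_lt_one_iff.mp h1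
    simp [h2] at ht0
  have hs := (summable_cotTerm hz).hasSum
  have he : ∑' n, cotTerm (t : ℂ) n = Real.pi * Complex.cot (Real.pi * t) - 1 / t :=
    (cot_series_rep' hz).symm
  rw [he] at hs
  rw [← Complex.hasSum_ofReal]
  convert! hs.neg using 1
  · funext n
    rw [cotTerm_identity hz]
    have h3 : (0 : ℝ) < (n + 1) ^ 2 - t ^ 2 := by
      have := (sq_lt_one_iff_abs_lt_one t).mpr ht
      nlinarith [(Nat.cast_nonneg n : (0 : ℝ) ≤ n)]
    have h4 : ((n : ℂ) + 1) ^ 2 - (t : ℂ) ^ 2 ≠ 0 := by exact_mod_cast h3.ne'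
    have h5 : ((t : ℂ) + (n + 1)) * (t - (n + 1)) = -(((n : ℂ) + 1) ^ 2 - (t : ℂ) ^ 2) := by ring
    rw [h5]
    push_cast
    field_simp
  · push_cast
    ring

lemma hasSum_inv_sub_cot (y : ℝ) (hy0 : y ≠ 0) (hy : |y| < Real.pi) :
    HasSum (fun k : ℕ => (-1 : ℝ) ^ k * 4 ^ (k + 1) / (Nat.factorial (2 * (k + 1)) : ℝ) *
      ((bernoulli (2 * (k + 1)) : ℚ) : ℝ) * y ^ (2 * k + 1))
      (1 / y - Real.cot y) := by
  have hpi := Real.pi_pos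
  obtain ⟨t, rfl⟩ : ∃ t, y = Real.pi * t := ⟨y / Real.pi, by field_simp⟩
  have ht0 : t ≠ 0 := right_ne_zero_of_mul hy0
  have ht : |t| < 1 := by
    rw [abs_mul, abs_of_pos hpi] at hy
    nlinarith
  have hsq : t ^ 2 < 1 := (sq_lt_one_iff_abs_lt_one t).mpr ht
  let a : ℕ × ℕ → ℝ := fun p => 2 * t ^ (2 * p.2 + 1) / ((p.1 : ℝ) + 1) ^ (2 * p.2 + 2)
  -- The double series is dominated by the product of `Σ 1/(n+1)²` and a geometric series.
  have hsum : Summable a := by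
    have hn : Summable (fun n : ℕ => 1 / ((n : ℝ) + 1) ^ 2) := by
      have := (summable_nat_add_iff 1).mpr
        (Real.summable_one_div_nat_pow.mpr (by norm_num : 1 < 2))
      simpa using this
    have hk : Summable (fun k : ℕ => 2 * |t| * (t ^ 2) ^ k) :=
      (summable_geometric_of_lt_one (sq_nonneg t) hsq).mul_left _
    refine Summable.of_norm_bounded (hn.mul_of_nonneg hk (fun n => by positivity)
      (fun k => by positivity)) ?_
    rintro ⟨n, k⟩
    have hn1 : (1 : ℝ) ≤ n + 1 := by linarith [(Nat.cast_nonneg n : (0 : ℝ) ≤ n)]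
    have hle : ((n : ℝ) + 1) ^ 2 ≤ ((n : ℝ) + 1) ^ (2 * k + 2) :=
      pow_le_pow_right₀ hn1 (by omega)
    have hnorm : ‖a (n, k)‖ = 2 * |t| * (t ^ 2) ^ k / ((n : ℝ) + 1) ^ (2 * k + 2) := by
      simp only [a, Real.norm_eq_abs, abs_div, abs_mul, abs_pow, abs_two]
      rw [abs_of_pos (by linarith : (0 : ℝ) < n + 1), pow_succ, pow_mul, sq_abs]
      ring
    rw [hnorm]
    calc _ ≤ 2 * |t| * (t ^ 2) ^ k / ((n : ℝ) + 1) ^ 2 := by gcongr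
      _ = _ := by ring
  have hrow : HasSum (fun n : ℕ => 2 * t / (((n : ℝ) + 1) ^ 2 - t ^ 2)) (∑' p, a p) := by
    refine hsum.hasSum.prod_fiberwise fun n => ?_
    have hn1 : (1 : ℝ) ≤ ((n : ℝ) + 1) ^ 2 :=
      one_le_pow₀ (by linarith [(Nat.cast_nonneg n : (0 : ℝ) ≤ n)])
    have hr : t ^ 2 / ((n : ℝ) + 1) ^ 2 < 1 := by
      rw [div_lt_one (by positivity)]
      linarith
    have hg := (hasSum_geometric_of_lt_one (by positivity) hr).mul_left
      (2 * t / ((n : ℝ) + 1) ^ 2)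
    convert! hg using 1
    · funext k
      simp only [a, div_pow, ← pow_mul]
      field_simp
      ring
    · have h3 : ((n : ℝ) + 1) ^ 2 - t ^ 2 ≠ 0 := by linarith
      have h4 : 1 - t ^ 2 / ((n : ℝ) + 1) ^ 2 =
          (((n : ℝ) + 1) ^ 2 - t ^ 2) / ((n : ℝ) + 1) ^ 2 := by
        field_simp
      rw [h4]
      field_simp
  have hcol : HasSum (fun k : ℕ => 2 * t ^ (2 * k + 1) *
      ((-1 : ℝ) ^ (k + 1 + 1) * (2 : ℝ) ^ (2 * (k + 1) - 1) * Real.pi ^ (2 * (k + 1)) *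
        bernoulli (2 * (k + 1)) / (Nat.factorial (2 * (k + 1)) : ℝ))) (∑' p, a p) := by
    have hswap : HasSum (fun p : ℕ × ℕ => a p.swap) (∑' p, a p) :=
      (Equiv.prodComm ℕ ℕ).hasSum_iff.mpr hsum.hasSum
    refine hswap.prod_fiberwise fun k => ?_
    have hz := (hasSum_nat_add_iff' 1).mpr (hasSum_zeta_nat (Nat.succ_ne_zero k))
    have hz' := hz.mul_left (2 * t ^ (2 * k + 1))
    convert! hz' using 1
    · funext n
      simp only [a, Prod.swap, Nat.succ_eq_add_one, mul_add, mul_one, mul_one_div]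
      push_cast
      rfl
    -- The index `n = 0` contributes `1 / 0 = 0` to the zeta series.
    · simp
  have hS := hrow.unique (hasSum_mittagLeffler_cot t ht0 ht)
  rw [hS] at hcol
  convert! hcol.mul_left (1 / Real.pi) using 1
  · funext k
    have e1 : 2 * (k + 1) - 1 = 2 * k + 1 := by omega
    have e2 : (4 : ℝ) ^ (k + 1) = 2 * 2 ^ (2 * k + 1) := by
      rw [show (4 : ℝ) = 2 ^ 2 by norm_num, ← pow_mul]
      ring
    have e3 : Real.pi ^ (2 * (k + 1)) = Real.pi * Real.pi ^ (2 * k + 1) := by ring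
    have e4 : (-1 : ℝ) ^ (k + 1 + 1) = (-1) ^ k := by ring
    rw [e1, e2, e3, e4, mul_pow]
    field_simp
  · field_simp

/-- For `|x| < π/2`,
`tan x = Σ_{k=1}^∞ (−1)^{k+1} 4^k(4^k−1)/(2k)! · B_{2k} · x^{2k−1}`,
with `B` the Bernoulli numbers in the convention `B₁ = −1/2`. -/
theorem tan_series (x : ℝ) (hx : |x| < Real.pi / 2) :
    HasSum
      (fun k : ℕ =>
        (-1 : ℝ) ^ (k + 2) * (4 ^ (k + 1) * ((4 : ℝ) ^ (k + 1) - 1)) /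
          (Nat.factorial (2 * (k + 1)) : ℝ) *
          ((bernoulli (2 * (k + 1)) : ℚ) : ℝ) * x ^ (2 * (k + 1) - 1))
      (Real.tan x) := by
  rcases eq_or_ne x 0 with rfl | hx0
  · convert! hasSum_zero using 1
    · funext k
      rw [zero_pow (by omega), mul_zero]
    · exact Real.tan_zero
  have hpi := Real.pi_pos
  have h1 := hasSum_inv_sub_cot x hx0 (by linarith)
  have h2 := hasSum_inv_sub_cot (2 * x) (by simpa using hx0)
    (by rw [abs_mul, abs_two]; linarith)
  convert! (h2.mul_left 2).sub h1 using 1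
  · funext k
    have e1 : 2 * (k + 1) - 1 = 2 * k + 1 := by omega
    have e2 : (4 : ℝ) ^ (k + 1) = 2 * 2 ^ (2 * k + 1) := by
      rw [show (4 : ℝ) = 2 ^ 2 by norm_num, ← pow_mul]
      ring
    have e3 : (-1 : ℝ) ^ (k + 2) = (-1) ^ k := by ring
    rw [e1, e3, e2, mul_pow]
    ring
  · obtain ⟨hl, hr⟩ := abs_lt.mp hx
    have hc : Real.cos x ≠ 0 := (Real.cos_pos_of_mem_Ioo ⟨by linarith, hr⟩).ne'
    have hs : Real.sin x ≠ 0 := fun h =>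
      hx0 ((Real.sin_eq_zero_iff_of_lt_of_lt (by linarith) (by linarith)).mp h)
    rw [Real.tan_eq_sin_div_cos, Real.cot_eq_cos_div_sin, Real.cot_eq_cos_div_sin,
      Real.sin_two_mul, Real.cos_two_mul']
    field_simp
    ring
end

section
/- For every real x with 0 < |x| < π, cot x = 1/x − Σ_{k=1}^{∞} 4^k |B_{2k}| / (2k)! · x^{2k−1}, where cot x = cos x / sin x and the series converges. -/
/-!
Put `y = x / π`, so that `0 < |y| < 1`. The Mittag-Leffler expansion of the cotangent reads
`1 / y - π cot (π y) = ∑ₙ 2 y / ((n + 1)² - y²)`. Expanding each term as a geometric series turns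
the right-hand side into the double series with terms `2 y ^ (2k + 1) / (n + 1) ^ (2k + 2)`
(`cotDoubleTerm`), which converges absolutely. Summing over `n` first gives
`∑ₖ 2 ζ(2k + 2) y ^ (2k + 1)`, and Euler's formula
`ζ(2k) = 2 ^ (2k - 1) π ^ (2k) |B_{2k}| / (2k)!` identifies the coefficients. The absolute value
takes care of the sign `(-1) ^ (k + 1)` in the usual form of that formula, as `ζ(2k) ≥ 0`.
-/

/-- The double series whose row sums are the even zeta values times powers of `y`, and whose
column sums are the partial fractions of the cotangent. -/
noncomputable def cotDoubleTerm (y : ℝ) (p : ℕ × ℕ) : ℝ :=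
  2 * y ^ (2 * p.1 + 1) * (1 / ((p.2 : ℝ) + 1) ^ (2 * (p.1 + 1)))

lemma summable_cotDoubleTerm {y : ℝ} (hy : |y| < 1) : Summable (cotDoubleTerm y) := by
  have h1 : Summable fun k : ℕ => 2 * |y| * (|y| ^ 2) ^ k :=
    (summable_geometric_of_lt_one (by positivity)
      (pow_lt_one₀ (abs_nonneg y) hy (by norm_num))).mul_left _
  have h2 : Summable fun n : ℕ => 1 / ((n : ℝ) + 1) ^ 2 := by
    have := (summable_nat_add_iff 1).2 (Real.summable_one_div_nat_pow.2 (one_lt_two))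
    simpa using this
  refine Summable.of_norm_bounded (h1.mul_of_nonneg h2 (fun k => by positivity)
    (fun n => by positivity)) ?_
  rintro ⟨k, n⟩
  have h : ((n : ℝ) + 1) ^ 2 ≤ ((n : ℝ) + 1) ^ (2 * (k + 1)) :=
    pow_le_pow_right₀ (by linarith [(Nat.cast_nonneg n : (0 : ℝ) ≤ n)]) (by omega)
  have e : ‖cotDoubleTerm y (k, n)‖
      = 2 * |y| * (|y| ^ 2) ^ k * (1 / ((n : ℝ) + 1) ^ (2 * (k + 1))) := by
    have : |(n : ℝ) + 1| = n + 1 := abs_of_nonneg (by positivity)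
    simp only [cotDoubleTerm, norm_mul, norm_div, norm_pow, Real.norm_eq_abs, this, abs_one,
      abs_two]
    ring
  rw [e]
  gcongr

/-- Summing over the powers of `y` is a geometric series. -/
lemma hasSum_cotDoubleTerm_left {y : ℝ} (hy : |y| < 1) (n : ℕ) :
    HasSum (fun k : ℕ => cotDoubleTerm y (k, n)) (2 * y / (((n : ℝ) + 1) ^ 2 - y ^ 2)) := by
  have hn : (1 : ℝ) ≤ ((n : ℝ) + 1) ^ 2 :=
    one_le_pow₀ (by linarith [(Nat.cast_nonneg n : (0 : ℝ) ≤ n)])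
  have hy2 : y ^ 2 < 1 := (sq_lt_one_iff_abs_lt_one y).2 hy
  have hpos : (0 : ℝ) < ((n : ℝ) + 1) ^ 2 := by positivity
  have hr : y ^ 2 / ((n : ℝ) + 1) ^ 2 < 1 := (div_lt_one hpos).2 (by linarith)
  have hg := (hasSum_geometric_of_lt_one (by positivity) hr).mul_left (2 * y / ((n : ℝ) + 1) ^ 2)
  have hd : ((n : ℝ) + 1) ^ 2 - y ^ 2 ≠ 0 := by linarith
  convert! hg using 1
  · funext k
    simp only [cotDoubleTerm]
    rw [div_pow, ← pow_mul, ← pow_mul, pow_succ y, mul_add 2 k 1, pow_add]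
    field_simp
  · rw [one_sub_div hpos.ne', inv_div]
    field_simp

/-- Summing over `n` gives an even zeta value, written with `|B_{2k + 2}|`. -/
lemma hasSum_cotDoubleTerm_right (y : ℝ) (k : ℕ) :
    HasSum (fun n : ℕ => cotDoubleTerm y (k, n))
      (2 * y ^ (2 * k + 1) * (2 ^ (2 * k + 1) * Real.pi ^ (2 * (k + 1)) *
        |((bernoulli (2 * (k + 1)) : ℚ) : ℝ)| / (Nat.factorial (2 * (k + 1)) : ℝ))) := by
  have hz := hasSum_zeta_nat (Nat.succ_ne_zero k)
  have h0 := hz.nonneg (fun n => by positivity)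
  have habs := abs_of_nonneg h0
  rw [← habs] at hz
  simp only [abs_div, abs_mul, abs_pow, abs_neg, abs_one, one_pow, one_mul, abs_two,
    abs_of_pos Real.pi_pos, Nat.abs_cast, Nat.succ_eq_add_one] at hz
  have hs := (hasSum_nat_add_iff' 1).2 hz
  simp only [Finset.range_one, Finset.sum_singleton, Nat.cast_zero] at hs
  rw [zero_pow (by omega), div_zero, sub_zero, show 2 * (k + 1) - 1 = 2 * k + 1 by omega] at hs
  simpa only [cotDoubleTerm, Nat.cast_add, Nat.cast_one] using hs.mul_left (2 * y ^ (2 * k + 1))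

/-- The Mittag-Leffler expansion of the cotangent on the punctured interval `(-1, 1)`. -/
lemma tsum_cot_partialFractions {y : ℝ} (hy0 : y ≠ 0) (hy : |y| < 1) :
    ∑' n : ℕ, 2 * y / (((n : ℝ) + 1) ^ 2 - y ^ 2) =
      1 / y - Real.pi * (Real.cos (Real.pi * y) / Real.sin (Real.pi * y)) := by
  have hmem : (y : ℂ) ∈ Complex.integerComplement := by
    rintro ⟨m, hm⟩
    have hm' : (m : ℝ) = y := by exact_mod_cast hm
    have h1 : |m| < 1 := by
      rw [← hm'] at hy
      exact_mod_cast hy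
    have h2 : m = 0 := Int.abs_lt_one_iff.1 h1
    exact hy0 (by rw [← hm', h2, Int.cast_zero])
  have h := cot_series_rep' hmem
  have hterm : ∀ n : ℕ, 1 / ((y : ℂ) - (n + 1)) + 1 / ((y : ℂ) + (n + 1)) =
      ((-(2 * y / (((n : ℝ) + 1) ^ 2 - y ^ 2)) : ℝ) : ℂ) := by
    intro n
    have hn : (0 : ℝ) ≤ n := Nat.cast_nonneg n
    have ⟨hl, hu⟩ := abs_lt.1 hy
    have ha : y - (n + 1) ≠ 0 := by linarith
    have hb : y + (n + 1) ≠ 0 := by linarith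
    have hc : ((n : ℝ) + 1) ^ 2 - y ^ 2 ≠ 0 := by
      rw [show ((n : ℝ) + 1) ^ 2 - y ^ 2 = -((y - (n + 1)) * (y + (n + 1))) by ring]
      exact neg_ne_zero.2 (mul_ne_zero ha hb)
    have hreal : 1 / (y - (n + 1)) + 1 / (y + (n + 1)) =
        -(2 * y / (((n : ℝ) + 1) ^ 2 - y ^ 2)) := by
      rw [one_div_add_one_div ha hb, ← div_neg]
      congr 1 <;> ring
    rw [← hreal]
    push_cast
    rfl
  simp_rw [hterm] at h
  rw [← Complex.ofReal_tsum, tsum_neg, Complex.cot_eq_cos_div_sin] at h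
  have h' : Real.pi * (Real.cos (Real.pi * y) / Real.sin (Real.pi * y)) - 1 / y =
      -∑' n : ℕ, 2 * y / (((n : ℝ) + 1) ^ 2 - y ^ 2) := by
    exact_mod_cast h
  linarith

/-- For `0 < |x| < π`,
`cot x = 1/x − Σ_{k=1}^∞ 4^k |B_{2k}|/(2k)! · x^{2k−1}`, where `cot x = cos x / sin x`. -/
theorem cot_series (x : ℝ) (hx0 : 0 < |x|) (hx : |x| < Real.pi) :
    HasSum
      (fun k : ℕ =>
        (4 : ℝ) ^ (k + 1) * |((bernoulli (2 * (k + 1)) : ℚ) : ℝ)| /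
          (Nat.factorial (2 * (k + 1)) : ℝ) * x ^ (2 * (k + 1) - 1))
      (1 / x - Real.cos x / Real.sin x) := by
  have hpi := Real.pi_pos
  have hx' : x ≠ 0 := abs_pos.1 hx0
  obtain ⟨y, rfl⟩ : ∃ y, x = Real.pi * y := ⟨x / Real.pi, by field_simp⟩
  have hy0 : y ≠ 0 := right_ne_zero_of_mul hx'
  have hy : |y| < 1 := by
    rw [abs_mul, abs_of_pos hpi] at hx
    nlinarith
  have hsum := summable_cotDoubleTerm hy
  have hrows := hsum.hasSum.prod_fiberwise (hasSum_cotDoubleTerm_right y)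
  have hcols := ((Equiv.prodComm ℕ ℕ).hasSum_iff.2 hsum.hasSum).prod_fiberwise
    (hasSum_cotDoubleTerm_left hy)
  rw [← hcols.tsum_eq, tsum_cot_partialFractions hy0 hy] at hrows
  convert! hrows.mul_left (1 / Real.pi) using 1
  · funext k
    rw [show 2 * (k + 1) - 1 = 2 * k + 1 by omega, show (4 : ℝ) = 2 ^ 2 by norm_num, ← pow_mul,
      mul_pow, show 2 * (k + 1) = 2 * k + 1 + 1 by omega,
      pow_succ (2 : ℝ), pow_succ Real.pi (2 * k + 1)]
    field_simp
  · field_simp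
end

section
/- For every real z with 0 ≤ z ≤ 1, arccos(1 − z) = √(2z) · Σ_{k=0}^{∞} (2k−1)!! / (4^k · k! · (2k+1)) · z^k, where the series converges; here (2k−1)!! = 1·3·5···(2k−1), with (−1)!! = 1. -/
/-!
The half-angle identity `arccos (1 - 2 w ^ 2) = 2 arcsin w` for `0 ≤ w ≤ 1`, applied with
`w = √(z / 2)`, reduces the claim to the Maclaurin series
`arcsin w = ∑ c_k / (2 k + 1) * w ^ (2 k + 1)`, where `c_k = (2 k - 1)‼ / (2 ^ k * k !)`. As
`z ≤ 1`, the point `w` lies in the open unit disc, so no boundary convergence is involved.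

The arcsine series (`hasSum_arcsin`) comes from the binomial series
`∑ c_k x ^ k = (1 - x) ^ (-1/2)` (`hasSum_arcsinCoeff`) by substituting `x = y ^ 2` and integrating
term by term: both sides have derivative `1 / √(1 - y ^ 2)` and vanish at `0`.
-/

/-- The coefficient `(2 k - 1)‼ / (2 ^ k * k !)` of `x ^ k` in `(1 - x) ^ (-1/2)`. Truncated
subtraction gives the value `1` at `k = 0`, in line with the convention `(-1)‼ = 1`. -/
noncomputable def arcsinCoeff (k : ℕ) : ℝ :=
  (Nat.doubleFactorial (2 * k - 1) : ℝ) / (2 ^ k * (Nat.factorial k : ℝ))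

lemma arcsinCoeff_nonneg (k : ℕ) : 0 ≤ arcsinCoeff k := by
  unfold arcsinCoeff
  positivity

lemma doubleFactorial_eq_ascPochhammer (k : ℕ) :
    (Nat.doubleFactorial (2 * k - 1) : ℝ) = 2 ^ k * (ascPochhammer ℝ k).eval (1 / 2) := by
  induction k with
  | zero => simp
  | succ k ih =>
    rw [ascPochhammer_succ_eval, show 2 * (k + 1) - 1 = 2 * k + 1 by omega,
      Nat.doubleFactorial_add_one, Nat.cast_mul, ih]
    push_cast
    ring

lemma choose_eq_arcsinCoeff (k : ℕ) :
    Ring.choose ((1 / 2 : ℝ) + k - 1) k = arcsinCoeff k := by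
  have h := Ring.factorial_nsmul_multichoose_eq_ascPochhammer (1 / 2 : ℝ) k
  rw [Ring.multichoose_eq, Polynomial.ascPochhammer_smeval_cast,
    Polynomial.ascPochhammer_smeval_eq_eval, nsmul_eq_mul] at h
  have hk : (Nat.factorial k : ℝ) ≠ 0 := by positivity
  rw [arcsinCoeff, doubleFactorial_eq_ascPochhammer, ← h]
  field_simp

lemma hasSum_arcsinCoeff {x : ℝ} (hx : |x| < 1) :
    HasSum (fun k => arcsinCoeff k * x ^ k) (1 / √(1 - x)) := by
  have h := (Real.one_div_one_sub_rpow_hasFPowerSeriesOnBall_zero (1 / 2)).hasSum (y := x)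
    (by simpa [enorm_eq_nnnorm, ← NNReal.coe_lt_coe] using hx)
  simpa [FormalMultilinearSeries.ofScalars, Real.sqrt_eq_rpow, ← choose_eq_arcsinCoeff] using h

/-- The Maclaurin series of the arcsine on the open unit interval. -/
lemma hasSum_arcsin {w : ℝ} (hw : |w| < 1) :
    HasSum (fun k : ℕ => arcsinCoeff k / (2 * k + 1) * w ^ (2 * k + 1)) (Real.arcsin w) := by
  -- On `(-r, r)` the differentiated series is dominated by its value at `r`.
  obtain ⟨r, hwr, hr1⟩ := exists_between hw
  have hr0 : 0 < r := (abs_nonneg w).trans_lt hwr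
  have hw_mem : w ∈ Set.Ioo (-r) r := abs_lt.1 hwr
  have h0_mem : (0 : ℝ) ∈ Set.Ioo (-r) r := ⟨by linarith, hr0⟩
  have sq_lt {y : ℝ} (hy : |y| < 1) : |y ^ 2| < 1 := by
    rw [abs_pow]
    exact pow_lt_one₀ (abs_nonneg y) hy two_ne_zero
  have hu : Summable fun k => arcsinCoeff k * (r ^ 2) ^ k :=
    (hasSum_arcsinCoeff (sq_lt (by rwa [abs_of_pos hr0]))).summable
  have hg : ∀ (k : ℕ) (y : ℝ), y ∈ Set.Ioo (-r) r →
      HasDerivAt (fun y : ℝ => arcsinCoeff k / (2 * k + 1) * y ^ (2 * k + 1))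
        (arcsinCoeff k * (y ^ 2) ^ k) y := by
    intro k y _
    have hk : (2 * k + 1 : ℝ) ≠ 0 := by positivity
    convert! (hasDerivAt_pow (2 * k + 1) y).const_mul (arcsinCoeff k / (2 * k + 1)) using 1
    push_cast
    rw [← pow_mul]
    field_simp
  have hg' : ∀ (k : ℕ) (y : ℝ), y ∈ Set.Ioo (-r) r →
      ‖arcsinCoeff k * (y ^ 2) ^ k‖ ≤ arcsinCoeff k * (r ^ 2) ^ k := by
    intro k y hy
    have hyr : y ^ 2 ≤ r ^ 2 := sq_le_sq' hy.1.le hy.2.le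
    have hc := arcsinCoeff_nonneg k
    rw [Real.norm_of_nonneg (by positivity)]
    gcongr
  have hg0 : Summable fun k : ℕ => arcsinCoeff k / (2 * k + 1) * (0 : ℝ) ^ (2 * k + 1) := by
    simp
  have hsum := summable_of_summable_hasDerivAt_of_isPreconnected hu isOpen_Ioo
    isPreconnected_Ioo hg hg' h0_mem hg0 hw_mem
  have hderiv : ∀ y ∈ Set.Ioo (-r) r,
      HasDerivAt (fun y : ℝ => ∑' k : ℕ, arcsinCoeff k / (2 * k + 1) * y ^ (2 * k + 1))
        (1 / √(1 - y ^ 2)) y := by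
    intro y hy
    have hy1 : |y| < 1 := (abs_lt.2 hy).trans hr1
    rw [← (hasSum_arcsinCoeff (sq_lt hy1)).tsum_eq]
    exact hasDerivAt_tsum_of_isPreconnected hu isOpen_Ioo isPreconnected_Ioo hg hg' h0_mem hg0 hy
  have harcsin : ∀ y ∈ Set.Ioo (-r) r, HasDerivAt Real.arcsin (1 / √(1 - y ^ 2)) y := by
    intro y hy
    exact Real.hasDerivAt_arcsin (by linarith [hy.1]) (by linarith [hy.2])
  have heq := isOpen_Ioo.eqOn_of_deriv_eq isPreconnected_Ioo
    (fun y hy => (hderiv y hy).differentiableAt.differentiableWithinAt)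
    (fun y hy => (harcsin y hy).differentiableAt.differentiableWithinAt)
    (fun y hy => (hderiv y hy).deriv.trans (harcsin y hy).deriv.symm) h0_mem (by simp) hw_mem
  exact heq ▸ hsum.hasSum

lemma arccos_one_sub_two_mul_sq {w : ℝ} (h0 : 0 ≤ w) (h1 : w ≤ 1) :
    Real.arccos (1 - 2 * w ^ 2) = 2 * Real.arcsin w := by
  have hcos : Real.cos (2 * Real.arcsin w) = 1 - 2 * w ^ 2 := by
    rw [Real.cos_two_mul, Real.cos_sq', Real.sin_arcsin (by linarith) h1]
    ring
  rw [← hcos, Real.arccos_cos]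
  · linarith [Real.arcsin_nonneg.2 h0]
  · linarith [Real.arcsin_le_pi_div_two w]

/-- For `0 ≤ z ≤ 1`,
`arccos(1 − z) = √(2z) · Σ_{k=0}^∞ (2k−1)!!/(4^k·k!·(2k+1)) · z^k`,
with the convention `(−1)!! = 1`. -/
theorem arccos_series (z : ℝ) (h0 : 0 ≤ z) (h1 : z ≤ 1) :
    ∃ S : ℝ,
      HasSum
        (fun k : ℕ =>
          (Nat.doubleFactorial (2 * k - 1) : ℝ) /
            (4 ^ k * (Nat.factorial k : ℝ) * (2 * k + 1 : ℝ)) * z ^ k) S ∧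
      Real.arccos (1 - z) = Real.sqrt (2 * z) * S := by
  rcases h0.eq_or_lt with rfl | hz
  · -- At `z = 0` the factor `√(2z)` vanishes, so only convergence matters.
    refine ⟨_, hasSum_single 0 fun k hk => ?_, by simp⟩
    simp [hk]
  set w := √(z / 2) with hw_def
  have hw0 : 0 < w := Real.sqrt_pos.2 (by linarith)
  have hw2 : w ^ 2 = z / 2 := Real.sq_sqrt (by linarith)
  have hw1 : w < 1 := by nlinarith
  have h2w : √(2 * z) = 2 * w := by
    rw [show 2 * z = (2 * w) ^ 2 by rw [mul_pow, hw2]; ring, Real.sqrt_sq (by positivity)]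
  refine ⟨Real.arcsin w / w, ?_, ?_⟩
  · convert! (hasSum_arcsin (by rwa [abs_of_pos hw0])).div_const w using 2 with k
    have hk : (2 * k + 1 : ℝ) ≠ 0 := by positivity
    have hf : (Nat.factorial k : ℝ) ≠ 0 := by positivity
    rw [arcsinCoeff, pow_succ, pow_mul, hw2, div_pow,
      show (4 : ℝ) ^ k = 2 ^ k * 2 ^ k by rw [← mul_pow]; norm_num]
    field_simp
  · rw [h2w, show 1 - z = 1 - 2 * w ^ 2 by rw [hw2]; ring,
      arccos_one_sub_two_mul_sq hw0.le hw1.le]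
    field_simp
end

section
/- For every real x with −1 < x < 2, log Γ(1 + x) = −log(1 + x) + x·(1 − γ) + Σ_{k=2}^{∞} (−1)^k (ζ(k) − 1) / k · x^k, where the series converges. -/
/-!
The coefficient `ζ(k) - 1` is `∑_{j ≥ 0} 1/(j+2)^k`, so the series is the double sum of
`(-1)^i (x/(j+2))^(i+2) / (i+2)` over `(j, i) ∈ ℕ × ℕ`. As `|x| < 2`, this is dominated by
`x² /(j+2)² * (|x|/2)^i`, so the order of summation may be exchanged (`summable_term`).

For fixed `j` the sum over `i` is the logarithmic series `y - log (1 + y)` with `y = x/(j+2)`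
(`hasSum_log_tail`). The partial sums over `j` are expressed through Euler's sequence
`logGammaSeq (1 + x) n → log Γ(1 + x)` and the sequence `H_n - log n → γ`
(`sum_eq_logGammaSeq`, `tendsto_sum`).
-/

open Filter Topology

/-- Summand of the double series: the `i`-th term of `y - log (1 + y)` at `y = x / (j + 2)`.
The pair is ordered `(j, i)`. -/
noncomputable def logGammaTerm (x : ℝ) (p : ℕ × ℕ) : ℝ :=
  (-1) ^ (p.2 + 2) * (x / (p.1 + 2)) ^ (p.2 + 2) / (p.2 + 2)

theorem hasSum_log_tail {y : ℝ} (hy : |y| < 1) :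
    HasSum (fun i : ℕ => (-1) ^ (i + 2) * y ^ (i + 2) / (i + 2 : ℝ)) (y - Real.log (1 + y)) := by
  have h := Real.hasSum_pow_div_log_of_abs_lt_one (x := -y) (by simpa using hy)
  rw [← hasSum_nat_add_iff' 1] at h
  convert! h using 1
  · funext i
    rw [neg_pow y]
    push_cast
    ring
  · simp
    ring

theorem summable_term {x : ℝ} (hx : |x| < 2) : Summable (logGammaTerm x) := by
  have hj : Summable (fun j : ℕ => (|x| / ((j : ℝ) + 2)) ^ 2) := by
    have h := (summable_nat_add_iff 2).2 (Real.summable_one_div_nat_pow.2 one_lt_two)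
    refine (h.mul_left (|x| ^ 2)).congr fun j => ?_
    push_cast
    rw [div_pow]
    ring
  have hi : Summable (fun i : ℕ => (|x| / 2) ^ i) :=
    summable_geometric_of_lt_one (by positivity) (by linarith)
  refine Summable.of_norm_bounded
    (hj.mul_of_nonneg hi (fun _ => by positivity) (fun _ => by positivity)) ?_
  rintro ⟨j, i⟩
  have hj0 : (0 : ℝ) ≤ j := j.cast_nonneg
  have hi0 : (0 : ℝ) ≤ i := i.cast_nonneg
  simp only [logGammaTerm, norm_div, norm_mul, norm_pow, norm_neg, norm_one, one_pow, one_mul,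
    Real.norm_eq_abs]
  rw [abs_of_pos (by positivity : (0 : ℝ) < j + 2), abs_of_pos (by positivity : (0 : ℝ) < i + 2)]
  calc (|x| / ((j : ℝ) + 2)) ^ (i + 2) / ((i : ℝ) + 2)
      ≤ (|x| / ((j : ℝ) + 2)) ^ (i + 2) := div_le_self (by positivity) (by linarith)
    _ = (|x| / ((j : ℝ) + 2)) ^ 2 * (|x| / ((j : ℝ) + 2)) ^ i := by ring
    _ ≤ (|x| / ((j : ℝ) + 2)) ^ 2 * (|x| / 2) ^ i := by
        gcongr
        linarith

theorem sum_eq_logGammaSeq {x : ℝ} (h1 : -1 < x) (n : ℕ) :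
    ∑ j ∈ Finset.range n, (x / ((j : ℝ) + 2) - Real.log (1 + x / ((j : ℝ) + 2))) =
      Real.BohrMollerup.logGammaSeq (1 + x) n + x * ((harmonic (n + 1) : ℝ) - Real.log n) - x
        + (Real.log (n + 1) - Real.log n) + Real.log (1 + x) := by
  -- All `log n` terms cancel, so the identity is proved without them, by induction.
  have key : ∑ j ∈ Finset.range n, (x / ((j : ℝ) + 2) - Real.log (1 + x / ((j : ℝ) + 2))) =
      Real.log ((n + 1).factorial : ℝ) - ∑ m ∈ Finset.range (n + 1), Real.log (1 + x + m)
        + x * (harmonic (n + 1) : ℝ) - x + Real.log (1 + x) := by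
    induction n with
    | zero => simp
    | succ n ih =>
      have hn : (0 : ℝ) ≤ n := n.cast_nonneg
      rw [Finset.sum_range_succ, ih, Finset.sum_range_succ _ (n + 1), harmonic_succ (n + 1),
        Nat.factorial_succ (n + 1)]
      have e : 1 + x / ((n : ℝ) + 2) = (1 + x + (n + 1)) / (n + 2) := by
        field_simp
        ring
      rw [e, Real.log_div (by linarith) (by positivity)]
      push_cast
      rw [Real.log_mul (by positivity) (by positivity)]
      have e2 : (n : ℝ) + 1 + 1 = n + 2 := by ring
      rw [e2]
      ring
  rw [key, Real.BohrMollerup.logGammaSeq, Nat.factorial_succ]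
  push_cast
  rw [Real.log_mul (by positivity) (by positivity)]
  ring

theorem tendsto_sum {x : ℝ} (h1 : -1 < x) :
    Tendsto (fun n : ℕ => ∑ j ∈ Finset.range n,
        (x / ((j : ℝ) + 2) - Real.log (1 + x / ((j : ℝ) + 2)))) atTop
      (𝓝 (Real.log (Real.Gamma (1 + x)) + Real.log (1 + x) -
        x * (1 - Real.eulerMascheroniConstant))) := by
  have hG := Real.BohrMollerup.tendsto_log_gamma (x := 1 + x) (by linarith)
  have hlog : Tendsto (fun n : ℕ => Real.log ((n : ℝ) + 1) - Real.log n) atTop (𝓝 0) :=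
    Real.tendsto_log_nat_add_one_sub_log
  have hH : Tendsto (fun n : ℕ => (harmonic (n + 1) : ℝ) - Real.log n) atTop
      (𝓝 Real.eulerMascheroniConstant) := by
    have h := ((tendsto_add_atTop_iff_nat 1).2 Real.tendsto_harmonic_sub_log).add hlog
    rw [add_zero] at h
    refine h.congr fun n => ?_
    push_cast
    ring
  simp_rw [sum_eq_logGammaSeq h1]
  convert! (((hG.add (hH.const_mul x)).sub_const x).add hlog).add_const (Real.log (1 + x)) using 2
  ring

/-- `ζ(k) - 1` is the sum of `1/m^k` over `m ≥ 2`. -/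
theorem hasSum_zeta_sub_one (i : ℕ) :
    HasSum (fun j : ℕ => (1 : ℝ) / ((j : ℝ) + 2) ^ (i + 2))
      ((∑' j : ℕ, (1 : ℝ) / (j + 1 : ℝ) ^ (i + 2)) - 1) := by
  have h : Summable (fun j : ℕ => (1 : ℝ) / ((j : ℝ) + 1) ^ (i + 2)) := by
    simpa using (summable_nat_add_iff 1).2
      (Real.summable_one_div_nat_pow.2 (by omega : 1 < i + 2))
  have h' := (hasSum_nat_add_iff' 1).2 h.hasSum
  convert! h' using 1
  · funext j
    push_cast
    ring
  · simp

/-- For `−1 < x < 2`,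
`log Γ(1+x) = −log(1+x) + x(1−γ) + Σ_{k=2}^∞ (−1)^k (ζ(k)−1)/k · x^k`,
where `ζ(k) = Σ_{j=1}^∞ 1/j^k` and `γ` is the Euler–Mascheroni constant. -/
theorem log_Gamma_series (x : ℝ) (h1 : -1 < x) (h2 : x < 2) :
    HasSum
      (fun i : ℕ =>
        (-1 : ℝ) ^ (i + 2) * ((∑' j : ℕ, (1 : ℝ) / (j + 1 : ℝ) ^ (i + 2)) - 1) /
          (i + 2 : ℝ) * x ^ (i + 2))
      (Real.log (Real.Gamma (1 + x)) + Real.log (1 + x) -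
        x * (1 - Real.eulerMascheroniConstant)) := by
  have hx : |x| < 2 := abs_lt.2 ⟨by linarith, h2⟩
  have hS := (summable_term hx).hasSum
  have hfib (j : ℕ) : HasSum (fun i : ℕ => logGammaTerm x (j, i))
      (x / ((j : ℝ) + 2) - Real.log (1 + x / ((j : ℝ) + 2))) := by
    have hj : (0 : ℝ) ≤ j := j.cast_nonneg
    refine hasSum_log_tail (y := x / ((j : ℝ) + 2)) ?_
    rw [abs_div, abs_of_pos (by positivity : (0 : ℝ) < j + 2), div_lt_one (by positivity)]
    linarith
  have hrow := hS.prod_fiberwise hfib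
  rw [tendsto_nhds_unique hrow.tendsto_sum_nat (tendsto_sum h1)] at hS
  have hcol (i : ℕ) : HasSum (fun j : ℕ => logGammaTerm x (j, i))
      ((-1 : ℝ) ^ (i + 2) * ((∑' j : ℕ, (1 : ℝ) / (j + 1 : ℝ) ^ (i + 2)) - 1) /
          (i + 2 : ℝ) * x ^ (i + 2)) := by
    have h := (hasSum_zeta_sub_one i).mul_left ((-1 : ℝ) ^ (i + 2) / (i + 2 : ℝ) * x ^ (i + 2))
    generalize (∑' j : ℕ, (1 : ℝ) / (j + 1 : ℝ) ^ (i + 2)) - 1 = z at h ⊢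
    convert! h using 1
    · funext j
      simp only [logGammaTerm, div_pow]
      ring
    · ring
  have hswap : HasSum (fun p : ℕ × ℕ => logGammaTerm x (p.2, p.1)) _ :=
    (Equiv.prodComm ℕ ℕ).hasSum_iff.2 hS
  exact hswap.prod_fiberwise hcol
end

section
/- For every odd integer n ≥ 3, ζ(n) = (2π)^n/(n−1) · Σ_{k=0}^{(n+1)/2} (−1)^k (1 − 2k) · B_{2k} B_{n+1−2k} / ((2k)! (n+1−2k)!) − 2 · Σ_{k=1}^{∞} (1 / (k^n (e^{2πk} − 1))) · (1 + 2πk·ε_n / (1 − e^{−2πk})), where ε_n = 0 if n ≡ 3 (mod 4) and ε_n = 2/(n−1) if n ≡ 1 (mod 4), and the infinite series converges. -/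
/-!
Write `n = 2m + 1`. The partial fractions of `coth` and `1/sinh²` at `πj` (`hasSum_coth`,
`hasSum_csch_sq`) give, for each `j ≥ 1`,

`π (1/j^n + 2 t_j) = (1 + e/m) / j^(2m+2) + ∑_{k ≥ 1} f(j², k²)`,

where `t_j` is the `j`-th term of the exponential series, `e = 1` for even `m` and `e = 0` for odd
`m`, and `f` is the rational function `kernelF` (`hasSum_kernelF_row`). The double sum of `f` over
`j, k ≥ 1` converges absolutely, so only the symmetrization `f(x, y) + f(y, x)` matters. The
choice of `e` makes its numerator divisible by `(x + y)²`, and it equals the symmetrization of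
`kernelG`, a combination of monomials `x^{-(k+1)} y^{-(m-k)}` (`kernel_symm`). Hence the double sum
is a finite combination of products `ζ(2k+2) ζ(2m-2k)` (`hasSum_kernelF`), and Euler's formula for
even zeta values turns it, together with the `ζ(2m+2)` term, into the Bernoulli sum
(`bernoulli_sum_eq`).
-/

open Real

/-- Partial fractions of `π coth(πj)`, where `coth(πj) = 1 + 2 / (e^{2πj} - 1)`: the cotangent
series at `ij`. -/
lemma hasSum_coth (j : ℝ) (hj : 0 < j) :
    HasSum (fun k : ℕ => 2 / (j ^ 2 + ((k : ℝ) + 1) ^ 2))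
      ((π * (1 + 2 / (exp (2 * π * j) - 1)) - 1 / j) / j) := by
  have hz : (Complex.I * j : ℂ) ∈ Complex.integerComplement := by
    rw [Complex.mem_integerComplement_iff]
    rintro ⟨n, hn⟩
    have := congrArg Complex.im hn
    simp at this
    exact hj.ne this
  have h := (summable_cotTerm hz).hasSum
  rw [show (∑' n, cotTerm (Complex.I * j) n) = _ from (cot_series_rep' hz).symm] at h
  have hjc : (j : ℂ) ≠ 0 := by exact_mod_cast hj.ne'
  rw [← Complex.hasSum_ofReal]
  convert! h.mul_left (-1 / (Complex.I * j)) using 1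
  · funext k
    rw [cotTerm_identity hz]
    have h1 : ((j : ℂ) ^ 2 + ((k : ℂ) + 1) ^ 2) ≠ 0 := by
      have : (j ^ 2 + ((k : ℝ) + 1) ^ 2) ≠ 0 := by positivity
      exact_mod_cast this
    have h2 : (Complex.I * j + ((k : ℂ) + 1)) * (Complex.I * j - ((k : ℂ) + 1))
        = -((j : ℂ) ^ 2 + ((k : ℂ) + 1) ^ 2) := by
      ring_nf; rw [Complex.I_sq]; ring
    rw [h2]
    push_cast
    field_simp
  · rw [Complex.cot_pi_eq_exp_ratio]
    have h3 : 2 * (π : ℂ) * Complex.I * (Complex.I * j) = -((2 * π * j : ℝ) : ℂ) := by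
      push_cast; linear_combination 2 * (π : ℂ) * j * Complex.I_sq
    rw [h3, Complex.exp_neg, ← Complex.ofReal_exp]
    have he : 1 < exp (2 * π * j) := by
      rw [Real.one_lt_exp_iff]; positivity
    set E := exp (2 * π * j)
    have hE0 : (E : ℂ) ≠ 0 := by
      have : E ≠ 0 := by linarith
      exact_mod_cast this
    have hE1 : (E : ℂ) - 1 ≠ 0 := by
      have : E - 1 ≠ 0 := by linarith
      exact_mod_cast this
    push_cast
    have h4 : ((E : ℂ)⁻¹ + 1) / (Complex.I * (1 - (E : ℂ)⁻¹)) = -Complex.I * (1 + 2 / ((E : ℂ) - 1)) := by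
      have : (1 - (E : ℂ)⁻¹) = (E - 1) / E := by field_simp
      rw [this]
      field_simp
      rw [Complex.I_sq]; ring
    rw [h4]
    field_simp
    linear_combination (1 - (E : ℂ)) * Complex.I_sq

/-- Partial fractions of `π² / sinh²(πj)`, where `4 sinh²(πj) = (e^{2πj} - 1)(1 - e^{-2πj})`: the
`q`-expansion of `∑ 1 / (z + d)²` at `z = ij`. -/
lemma hasSum_csch_sq (j : ℝ) (hj : 0 < j) :
    HasSum (fun k : ℕ => 2 * (j ^ 2 - ((k : ℝ) + 1) ^ 2) / (j ^ 2 + ((k : ℝ) + 1) ^ 2) ^ 2)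
      (4 * π ^ 2 / ((exp (2 * π * j) - 1) * (1 - exp (-(2 * π * j)))) - 1 / j ^ 2) := by
  let z : UpperHalfPlane := ⟨Complex.I * j, by simpa using hj⟩
  have hz : (z : ℂ) = Complex.I * j := rfl
  have hs : Summable fun n : ℤ => 1 / ((z : ℂ) + n) ^ 2 := by
    have := EisensteinSeries.linear_right_summable (z : ℂ) 1 (k := 2) le_rfl
    simpa using this
  have h := hs.hasSum
  have hq := EisensteinSeries.qExpansion_identity (k := 1) le_rfl z
  norm_num at hq
  have h3 : 2 * (π : ℂ) * Complex.I * (Complex.I * j) = -((2 * π * j : ℝ) : ℂ) := by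
    push_cast; linear_combination 2 * (π : ℂ) * j * Complex.I_sq
  have he : 1 < exp (2 * π * j) := by
    rw [Real.one_lt_exp_iff]; positivity
  rw [hz, h3] at hq
  have hn : ‖Complex.exp (-((2 * π * j : ℝ) : ℂ))‖ < 1 := by
    rw [← Complex.ofReal_neg, ← Complex.ofReal_exp, Complex.norm_real, norm_of_nonneg (exp_pos _).le,
      exp_lt_one_iff]
    have : 0 < 2 * π * j := by positivity
    linarith
  rw [tsum_coe_mul_geometric_of_norm_lt_one hn] at hq
  simp only [one_div, hz] at h
  rw [hq] at h
  have h' := (hasSum_nat_add_iff' 1).mpr h.nat_add_neg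
  have hjc : (j : ℂ) ≠ 0 := by exact_mod_cast hj.ne'
  rw [← Complex.hasSum_ofReal]
  convert! h'.neg using 1
  · funext k
    have h1 : ((j : ℂ) ^ 2 + ((k : ℂ) + 1) ^ 2) ≠ 0 := by
      have : (j ^ 2 + ((k : ℝ) + 1) ^ 2) ≠ 0 := by positivity
      exact_mod_cast this
    have h2 : (Complex.I * j + ((k : ℂ) + 1)) * (Complex.I * j - ((k : ℂ) + 1))
        = -((j : ℂ) ^ 2 + ((k : ℂ) + 1) ^ 2) := by
      ring_nf; rw [Complex.I_sq]; ring
    have h5 : (Complex.I * j + ((k : ℂ) + 1)) ≠ 0 := fun h => by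
      rw [h, zero_mul] at h2; exact h1 (neg_eq_zero.mp h2.symm)
    have h6 : (Complex.I * j - ((k : ℂ) + 1)) ≠ 0 := fun h => by
      rw [h, mul_zero] at h2; exact h1 (neg_eq_zero.mp h2.symm)
    push_cast
    have h7 : (Complex.I * j + -((k : ℂ) + 1)) = (Complex.I * j - ((k : ℂ) + 1)) := by ring
    have hden : ((j : ℂ) ^ 2 + ((k : ℂ) + 1) ^ 2) = -((Complex.I * j + ((k : ℂ) + 1)) * (Complex.I * j - ((k : ℂ) + 1))) := by
      rw [h2, neg_neg]
    have hnum : 2 * ((j : ℂ) ^ 2 - ((k : ℂ) + 1) ^ 2) = -((Complex.I * j + ((k : ℂ) + 1)) ^ 2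
        + (Complex.I * j - ((k : ℂ) + 1)) ^ 2) := by
      linear_combination 2 * (j : ℂ) ^ 2 * Complex.I_sq
    rw [h7, hden, hnum]
    generalize Complex.I * j + ((k : ℂ) + 1) = p at *
    generalize Complex.I * j - ((k : ℂ) + 1) = q at *
    field_simp
    ring
  · rw [Complex.exp_neg, ← Complex.ofReal_exp, Real.exp_neg]
    set E := exp (2 * π * j)
    have hE0 : (E : ℂ) ≠ 0 := by
      have : E ≠ 0 := by linarith
      exact_mod_cast this
    have hE1 : (E : ℂ) - 1 ≠ 0 := by
      have : E - 1 ≠ 0 := by linarith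
      exact_mod_cast this
    have : (1 - (E : ℂ)⁻¹) = (E - 1) / E := by field_simp
    push_cast
    simp [this, mul_pow]
    field_simp
    ring

/-- The value `ζ(2k)` in terms of Bernoulli numbers; it also gives `ζ(0) = -1/2` at `k = 0`. -/
noncomputable def zetaEven (k : ℕ) : ℝ :=
  (-1) ^ (k + 1) * (2 * π) ^ (2 * k) / 2 * (bernoulli (2 * k) : ℚ) / (Nat.factorial (2 * k))

lemma hasSum_zetaEven {k : ℕ} (hk : k ≠ 0) :
    HasSum (fun j : ℕ => (((((j : ℝ) + 1) ^ 2) ^ k)⁻¹)) (zetaEven k) := by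
  have h := (hasSum_nat_add_iff' 1).mpr (hasSum_zeta_nat hk)
  convert! h using 1
  · funext j
    push_cast
    rw [one_div, pow_mul]
  · have : (2 : ℝ) ^ (2 * k) = 2 ^ (2 * k - 1) * 2 := by
      rw [← pow_succ]; congr 1; omega
    rw [zetaEven, mul_pow, this]
    simp [hk]
    ring

/-- The kernel `f(x, y)`, with `e = 1` or `0` according to the parity of `m`: for fixed `x = j²`,
summing it over `y = k²`, `k ≥ 1`, gives the hyperbolic terms attached to `j`. -/
noncomputable def kernelF (m : ℕ) (e x y : ℝ) : ℝ :=
  (x ^ m)⁻¹ * (2 / (x + y) + e / m * (2 * (x - y) / (x + y) ^ 2))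

/-- The separated kernel `g(x, y)`, a finite combination of monomials `x^{-(k+1)} y^{-(m-k)}`, whose
double sum is a combination of products of even zeta values. -/
noncomputable def kernelG (m : ℕ) (x y : ℝ) : ℝ :=
  (-1) ^ m / m * ∑ k ∈ Finset.range m,
    (-1) ^ (k + 1) * (2 * (k : ℝ) + 1) * ((x ^ (k + 1))⁻¹ * (y ^ (m - k))⁻¹)

/-- Closed form, with denominators cleared, of the arithmetic-geometric sum inside
`y ^ m * kernelG m x y`. -/
lemma arithGeom_closed (m : ℕ) (x y : ℝ) (hx : x ≠ 0) :
    x ^ m * (∑ k ∈ Finset.range m, (-1) ^ (k + 1) * (2 * (k : ℝ) + 1) * ((x ^ (k + 1))⁻¹ * y ^ k))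
      * (x + y) ^ 2
      = -x ^ m * (x - y) + (-1) ^ m * y ^ m * ((2 * m + 1) * x + (2 * m - 1) * y) := by
  induction m with
  | zero => simp; ring
  | succ m ih =>
    rw [Finset.sum_range_succ]
    generalize (∑ k ∈ Finset.range m, (-1) ^ (k + 1) * (2 * (k : ℝ) + 1)
      * ((x ^ (k + 1))⁻¹ * y ^ k)) = S at *
    have h : x ^ (m + 1) * (S + (-1) ^ (m + 1) * (2 * (m : ℝ) + 1) * ((x ^ (m + 1))⁻¹ * y ^ m))
        = x * (x ^ m * S) + (-1) ^ (m + 1) * (2 * (m : ℝ) + 1) * y ^ m := by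
      field_simp
      ring
    rw [h]
    push_cast
    linear_combination x * ih

lemma kernelG_closed (m : ℕ) (x y : ℝ) (hx : 0 < x) (hy : 0 < y) :
    kernelG m x y = (-1) ^ m / m * ((x ^ m)⁻¹ * (y ^ m)⁻¹ / (x + y) ^ 2 *
      (-x ^ m * (x - y) + (-1) ^ m * y ^ m * ((2 * m + 1) * x + (2 * m - 1) * y))) := by
  rw [← arithGeom_closed m x y hx.ne', kernelG]
  congr 1
  have h : ∀ k ∈ Finset.range m,
      (-1) ^ (k + 1) * (2 * (k : ℝ) + 1) * ((x ^ (k + 1))⁻¹ * (y ^ (m - k))⁻¹)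
      = (y ^ m)⁻¹ * ((-1) ^ (k + 1) * (2 * (k : ℝ) + 1) * ((x ^ (k + 1))⁻¹ * y ^ k)) := by
    intro k hk
    have : y ^ m = y ^ (m - k) * y ^ k := by
      rw [← pow_add, Nat.sub_add_cancel (Finset.mem_range.mp hk).le]
    rw [this]
    field_simp
  rw [Finset.sum_congr rfl h, ← Finset.mul_sum]
  have := (add_pos hx hy).ne'
  field_simp

/-- `f` and `g` have the same symmetrization, hence the same double sum. -/
lemma kernel_symm (m : ℕ) (hm : m ≠ 0) (x y : ℝ) (hx : 0 < x) (hy : 0 < y) :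
    kernelF m (if Even m then 1 else 0) x y + kernelF m (if Even m then 1 else 0) y x
      = kernelG m x y + kernelG m y x := by
  have hm' : (m : ℝ) ≠ 0 := by exact_mod_cast hm
  have h1 := (add_pos hx hy).ne'
  have h2 := (add_pos hy hx).ne'
  rw [kernelG_closed m x y hx hy, kernelG_closed m y x hy hx, kernelF, kernelF, add_comm y x]
  rcases Nat.even_or_odd m with h | h
  · rw [if_pos h, h.neg_one_pow]
    field_simp
    ring
  · rw [if_neg (Nat.not_even_iff_odd.mpr h), h.neg_one_pow]
    field_simp
    ring

lemma summable_inv_sq : Summable fun j : ℕ => (((j : ℝ) + 1) ^ 2)⁻¹ := by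
  simpa using (hasSum_zetaEven one_ne_zero).summable

lemma summable_kernelF (m : ℕ) (hm : m ≠ 0) (e : ℝ) (he : 0 ≤ e) :
    Summable fun p : ℕ × ℕ => kernelF m e (((p.1 : ℝ) + 1) ^ 2) (((p.2 : ℝ) + 1) ^ 2) := by
  have hb := ((summable_inv_sq.mul_of_nonneg summable_inv_sq
    (fun _ => by positivity) (fun _ => by positivity))).mul_left (2 + 2 * (e / m))
  refine hb.of_norm_bounded ?_
  rintro ⟨j, k⟩
  simp only
  have hx : (1 : ℝ) ≤ ((j : ℝ) + 1) ^ 2 := one_le_pow₀ (by linarith [j.cast_nonneg (α := ℝ)])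
  have hy : (1 : ℝ) ≤ ((k : ℝ) + 1) ^ 2 := one_le_pow₀ (by linarith [k.cast_nonneg (α := ℝ)])
  generalize ((j : ℝ) + 1) ^ 2 = x at *
  generalize ((k : ℝ) + 1) ^ 2 = y at *
  have hx0 : 0 < x := by linarith
  have hy0 : 0 < y := by linarith
  have hem : 0 ≤ e / m := by positivity
  have h1 : (x ^ m)⁻¹ ≤ x⁻¹ := by
    gcongr
    exact le_self_pow₀ hx hm
  have h2 : 2 / (x + y) ≤ 2 * y⁻¹ := by
    rw [← div_eq_mul_inv]
    gcongr; linarith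
  have h3 : |2 * (x - y) / (x + y) ^ 2| ≤ 2 / (x + y) := by
    rw [abs_div, abs_of_pos (show 0 < (x + y) ^ 2 by positivity), abs_mul, abs_two,
      div_le_div_iff₀ (by positivity) (by positivity)]
    have : |x - y| ≤ x + y := abs_le.mpr ⟨by linarith, by linarith⟩
    nlinarith [mul_le_mul_of_nonneg_right this (show 0 ≤ x + y by linarith)]
  rw [kernelF, norm_mul, norm_of_nonneg (by positivity)]
  have h4 : ‖2 / (x + y) + e / m * (2 * (x - y) / (x + y) ^ 2)‖ ≤ (2 + 2 * (e / m)) * y⁻¹ := by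
    refine (norm_add_le _ _).trans ?_
    rw [norm_mul, norm_of_nonneg hem, norm_of_nonneg (by positivity), norm_eq_abs]
    nlinarith [mul_le_mul_of_nonneg_left (h3.trans h2) hem]
  calc _ ≤ x⁻¹ * ((2 + 2 * (e / m)) * y⁻¹) := by gcongr
    _ = _ := by ring

lemma hasSum_kernelG (m : ℕ) :
    HasSum (fun p : ℕ × ℕ => kernelG m (((p.1 : ℝ) + 1) ^ 2) (((p.2 : ℝ) + 1) ^ 2))
      ((-1) ^ m / m * ∑ k ∈ Finset.range m,
        (-1) ^ (k + 1) * (2 * (k : ℝ) + 1) * (zetaEven (k + 1) * zetaEven (m - k))) := by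
  unfold kernelG
  refine (hasSum_sum fun k hk => ?_).mul_left _
  have hk' : m - k ≠ 0 := by have := Finset.mem_range.mp hk; omega
  have h1 := hasSum_zetaEven k.succ_ne_zero
  have h2 := hasSum_zetaEven hk'
  exact (h1.mul h2 (h1.summable.mul_of_nonneg h2.summable
    (fun _ => by positivity) (fun _ => by positivity))).mul_left _

lemma hasSum_kernelF (m : ℕ) (hm : m ≠ 0) :
    HasSum (fun p : ℕ × ℕ => kernelF m (if Even m then 1 else 0)
        (((p.1 : ℝ) + 1) ^ 2) (((p.2 : ℝ) + 1) ^ 2))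
      ((-1) ^ m / m * ∑ k ∈ Finset.range m,
        (-1) ^ (k + 1) * (2 * (k : ℝ) + 1) * (zetaEven (k + 1) * zetaEven (m - k))) := by
  have hf := (summable_kernelF m hm (if Even m then 1 else 0) (by split_ifs <;> norm_num)).hasSum
  have hg := hasSum_kernelG m
  have hf2 := hf.add ((Equiv.prodComm ℕ ℕ).hasSum_iff.mpr hf)
  have hg2 := hg.add ((Equiv.prodComm ℕ ℕ).hasSum_iff.mpr hg)
  have heq := hf2.unique (hg2.congr_fun ?_)
  · have : ∀ a b : ℝ, a + a = b + b → a = b := fun a b h => by linarith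
    rw [← this _ _ heq]
    exact hf
  · rintro ⟨j, k⟩
    exact kernel_symm m hm _ _ (by positivity) (by positivity)

/-- Summing `f(j², k²)` over `k` by the partial fractions of `coth` and `1/sinh²`. -/
lemma hasSum_kernelF_row (m : ℕ) (e : ℝ) (j : ℝ) (hj : 0 < j) :
    HasSum (fun k : ℕ => kernelF m e (j ^ 2) (((k : ℝ) + 1) ^ 2))
      (π * (1 / j ^ (2 * m + 1) + 2 * ((1 / (j ^ (2 * m + 1) * (exp (2 * π * j) - 1))) *
        (1 + 2 * π * j * (e / m) / (1 - exp (-(2 * π * j))))))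
        - (1 + e / m) * ((j ^ 2) ^ (m + 1))⁻¹) := by
  have h := ((hasSum_coth j hj).add ((hasSum_csch_sq j hj).mul_left (e / m))).mul_left ((j ^ 2) ^ m)⁻¹
  convert! h using 1
  have he : 1 < exp (2 * π * j) := by
    rw [Real.one_lt_exp_iff]; positivity
  have he1 : exp (2 * π * j) - 1 ≠ 0 := by linarith
  have he2 : 1 - exp (-(2 * π * j)) ≠ 0 := by
    have : exp (-(2 * π * j)) < 1 := by
      rw [exp_lt_one_iff]
      have : 0 < 2 * π * j := by positivity
      linarith
    linarith
  generalize exp (2 * π * j) - 1 = A at *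
  generalize 1 - exp (-(2 * π * j)) = B at *
  generalize e / m = c
  rw [show j ^ (2 * m + 1) = (j ^ 2) ^ m * j by rw [pow_succ, pow_mul],
    show (j ^ 2) ^ (m + 1) = (j ^ 2) ^ m * j ^ 2 from pow_succ _ _]
  have : (j ^ 2) ^ m ≠ 0 := by positivity
  generalize (j ^ 2) ^ m = X at *
  field_simp
  ring

/-- The sign `(-1)^(m+1)` is independent of `k`, as `(-1)^(k+1) (-1)^(m+1-k+1) = (-1)^(m+1)`. -/
lemma zetaEven_mul (m k : ℕ) (hk : k ≤ m + 1) :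
    (2 * π) ^ (2 * m + 1) *
      ((bernoulli (2 * k) : ℚ) * (bernoulli (2 * m + 1 + 1 - 2 * k) : ℚ) /
        ((Nat.factorial (2 * k) : ℝ) * (Nat.factorial (2 * m + 1 + 1 - 2 * k) : ℝ)))
      = 2 * (-1) ^ (m + 1) / π * (zetaEven k * zetaEven (m + 1 - k)) := by
  obtain ⟨l, hl⟩ := Nat.exists_eq_add_of_le hk
  have h1 : 2 * m + 1 + 1 - 2 * k = 2 * l := by omega
  have h2 : m + 1 - k = l := by omega
  rw [h1, h2, zetaEven, zetaEven, hl]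
  have h3 : ((2 * π) ^ (2 * m + 1)) = (2 * π) ^ (2 * k) * (2 * π) ^ (2 * l) / (2 * π) := by
    rw [← pow_add, show 2 * k + 2 * l = 2 * m + 1 + 1 by omega, pow_succ _ (2 * m + 1)]
    field_simp
  have h4 : ((-1 : ℝ) ^ (k + l)) * ((-1) ^ (k + 1) * (-1) ^ (l + 1)) = 1 := by
    rw [← pow_add, ← pow_add]
    exact Even.neg_one_pow ⟨k + l + 1, by ring⟩
  rw [h3]
  have hp := pi_pos.ne'
  generalize (2 * π) ^ (2 * k) = P at *
  generalize (2 * π) ^ (2 * l) = Q at *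
  have : (Nat.factorial (2 * k) : ℝ) ≠ 0 := by positivity
  have : (Nat.factorial (2 * l) : ℝ) ≠ 0 := by positivity
  field_simp
  linear_combination (-(P * Q * bernoulli (2 * k) * bernoulli (2 * l))) * h4

/-- The Bernoulli sum, rewritten with even zeta values; its two extreme terms contribute the
multiple of `ζ(2m+2)`. -/
lemma bernoulli_sum_eq (m : ℕ) (hm : m ≠ 0) :
    π * ((2 * π) ^ (2 * m + 1) / (2 * m) *
      (∑ k ∈ Finset.range (m + 2),
        (-1 : ℝ) ^ k * (1 - 2 * (k : ℝ)) *
          ((bernoulli (2 * k) : ℚ) : ℝ) * ((bernoulli (2 * m + 1 + 1 - 2 * k) : ℚ) : ℝ) /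
          ((Nat.factorial (2 * k) : ℝ) * (Nat.factorial (2 * m + 1 + 1 - 2 * k) : ℝ))))
    = (-1) ^ m / m * (∑ k ∈ Finset.range m,
        (-1) ^ (k + 1) * (2 * (k : ℝ) + 1) * (zetaEven (k + 1) * zetaEven (m - k)))
      + (1 + (if Even m then 1 else 0) / m) * zetaEven (m + 1) := by
  have hp := pi_pos.ne'
  have hm' : (m : ℝ) ≠ 0 := by exact_mod_cast hm
  have hterm : ∀ k ∈ Finset.range (m + 2), (2 * π) ^ (2 * m + 1) * ((-1 : ℝ) ^ k * (1 - 2 * (k : ℝ)) *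
          ((bernoulli (2 * k) : ℚ) : ℝ) * ((bernoulli (2 * m + 1 + 1 - 2 * k) : ℚ) : ℝ) /
          ((Nat.factorial (2 * k) : ℝ) * (Nat.factorial (2 * m + 1 + 1 - 2 * k) : ℝ)))
      = 2 * (-1) ^ (m + 1) / π *
        ((-1 : ℝ) ^ k * (1 - 2 * (k : ℝ)) * (zetaEven k * zetaEven (m + 1 - k))) := by
    intro k hk
    have := zetaEven_mul m k (by have := Finset.mem_range.mp hk; omega)
    linear_combination ((-1 : ℝ) ^ k * (1 - 2 * (k : ℝ))) * this
  rw [div_mul_eq_mul_div, Finset.mul_sum, Finset.sum_congr rfl hterm, ← Finset.mul_sum,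
    Finset.sum_range_succ', Finset.sum_range_succ]
  have hmid : ∀ k ∈ Finset.range m, (-1 : ℝ) ^ (k + 1) * (1 - 2 * ((k + 1 : ℕ) : ℝ)) *
      (zetaEven (k + 1) * zetaEven (m + 1 - (k + 1)))
      = -((-1) ^ (k + 1) * (2 * (k : ℝ) + 1) * (zetaEven (k + 1) * zetaEven (m - k))) := by
    intro k _
    rw [Nat.add_sub_add_right]
    push_cast
    ring
  rw [Finset.sum_congr rfl hmid, Finset.sum_neg_distrib]
  generalize (∑ k ∈ Finset.range m,
        (-1) ^ (k + 1) * (2 * (k : ℝ) + 1) * (zetaEven (k + 1) * zetaEven (m - k))) = S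
  have hz : zetaEven 0 = -1 / 2 := by simp [zetaEven]
  simp only [Nat.sub_self, Nat.sub_zero, hz]
  push_cast
  rcases Nat.even_or_odd m with h | h
  · rw [if_pos h, pow_succ, h.neg_one_pow]
    field_simp
    ring
  · rw [if_neg (Nat.not_even_iff_odd.mpr h), pow_succ, h.neg_one_pow]
    field_simp
    ring

/-- Cohen's formula: for odd `n ≥ 3`,
`ζ(n) = (2π)^n/(n−1) · Σ_{k=0}^{(n+1)/2} (−1)^k (1−2k) B_{2k} B_{n+1−2k} / ((2k)!(n+1−2k)!)`
`       − 2 · Σ_{k=1}^∞ (1/(k^n (e^{2πk}−1))) (1 + 2πk·ε_n/(1 − e^{−2πk}))`,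
where `ε_n = 0` if `n ≡ 3 (mod 4)` and `ε_n = 2/(n−1)` if `n ≡ 1 (mod 4)`. -/
theorem zeta_odd_cohen (n : ℕ) (hn : 3 ≤ n) (hodd : Odd n) :
    ∃ T : ℝ,
      HasSum
        (fun k : ℕ =>
          (1 / ((k + 1 : ℝ) ^ n * (Real.exp (2 * Real.pi * (k + 1)) - 1))) *
            (1 + 2 * Real.pi * (k + 1 : ℝ) *
              (if n % 4 = 1 then 2 / ((n : ℝ) - 1) else 0) /
              (1 - Real.exp (-(2 * Real.pi * (k + 1)))))) T ∧
      (∑' j : ℕ, (1 : ℝ) / (j + 1 : ℝ) ^ n) =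
        (2 * Real.pi) ^ n / ((n : ℝ) - 1) *
          (∑ k ∈ Finset.range ((n + 1) / 2 + 1),
            (-1 : ℝ) ^ k * (1 - 2 * (k : ℝ)) *
              ((bernoulli (2 * k) : ℚ) : ℝ) * ((bernoulli (n + 1 - 2 * k) : ℚ) : ℝ) /
              ((Nat.factorial (2 * k) : ℝ) * (Nat.factorial (n + 1 - 2 * k) : ℝ)))
          - 2 * T := by
  obtain ⟨m, rfl⟩ := hodd
  have hm : m ≠ 0 := by omega
  have hm' : (m : ℝ) ≠ 0 := by exact_mod_cast hm
  have hp := pi_pos.ne'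
  set e : ℝ := if Even m then 1 else 0 with he
  have hε : (if (2 * m + 1) % 4 = 1 then 2 / (((2 * m + 1 : ℕ) : ℝ) - 1) else 0) = e / m := by
    have : (2 * m + 1) % 4 = 1 ↔ Even m := by rw [Nat.even_iff]; omega
    simp only [this, he]
    split_ifs
    · push_cast; field_simp; ring
    · simp
  rw [hε, show (2 * m + 1 + 1) / 2 + 1 = m + 2 by omega,
    show ((2 * m + 1 : ℕ) : ℝ) - 1 = 2 * m by push_cast; ring]
  have hB := bernoulli_sum_eq m hm
  -- Summing over `k` first turns the double sum into a single sum over `j`.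
  have hrow := (hasSum_kernelF m hm).prod_fiberwise
    (fun j => hasSum_kernelF_row m e ((j : ℝ) + 1) (by positivity))
  have hrow' := hrow.add ((hasSum_zetaEven m.succ_ne_zero).mul_left (1 + e / m))
  rw [← hB] at hrow'
  simp only [sub_add_cancel] at hrow'
  have hrow2 := hrow'.mul_left π⁻¹
  simp only [inv_mul_cancel_left₀ hp] at hrow2
  have hζ : HasSum (fun j : ℕ => 1 / ((j : ℝ) + 1) ^ (2 * m + 1))
      (∑' j : ℕ, 1 / ((j : ℝ) + 1) ^ (2 * m + 1)) := by
    refine Summable.hasSum ?_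
    have := (summable_nat_add_iff 1).mpr
      (Real.summable_one_div_nat_pow.mpr (show 1 < 2 * m + 1 by omega))
    simpa using this
  have hT := (hrow2.sub hζ).mul_left (1 / 2)
  refine ⟨_, hT.congr_fun fun k => ?_, ?_⟩
  · ring
  · ring
end
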